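/- arXiv:1004.4980 — 5 statements merged into one kernel-verified Lean document; each statement's English description precedes it below -/
import Mathlib

section
/- Let G be a bipartite graph and let α_1 ≤ α_2 ≤ … ≤ α_d be a multichain of basic 1-covers of G in the poset P(G). Then the function α_1 + α_2 + … + α_d (pointwise sum) is a basic d-cover of G. -/
/-- A `k`-cover of a graph `G`: a function on the vertices such that the values at the two
endpoints of every edge sum to at least `k`. -/
def IsCover {n : ℕ} (G : SimpleGraph (Fin n)) (k : ℕ) (α : Fin n → ℕ) : Prop :=
  ∀ ⦃i j : Fin n⦄, G.Adj i j → k ≤ α i + α j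

/-- A basic `k`-cover: a `k`-cover such that no pointwise smaller function is a `k`-cover. -/
def IsBasicCover {n : ℕ} (G : SimpleGraph (Fin n)) (k : ℕ) (α : Fin n → ℕ) : Prop :=
  IsCover G k α ∧ ∀ β : Fin n → ℕ, β ≤ α → IsCover G k β → β = α

/-- The partial order on basic 1-covers of a bipartite graph with parts `A` and `Aᶜ`:
`α ≤ β` iff `α a ≤ β a` for all `a ∈ A`. -/
def pLe {n : ℕ} (A : Finset (Fin n)) (α β : Fin n → ℕ) : Prop :=
  ∀ a ∈ A, α a ≤ β a

/-- The values of a basic `k`-cover are at most `k`. -/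
theorem IsBasicCover.le {n k : ℕ} {G : SimpleGraph (Fin n)} {α : Fin n → ℕ}
    (h : IsBasicCover G k α) (v : Fin n) : α v ≤ k := by
  have hβ := h.2 (fun u => min (α u) k) (fun u => min_le_left _ _) (by
    intro i j hij
    have := h.1 hij
    dsimp only
    omega)
  have : min (α v) k = α v := congrFun hβ v
  omega

/-- A vertex of positive weight in a basic `k`-cover lies on a tight edge. -/
theorem IsBasicCover.exists_adj_add_eq {n k : ℕ} {G : SimpleGraph (Fin n)} {α : Fin n → ℕ}
    (h : IsBasicCover G k α) {v : Fin n} (hv : 0 < α v) :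
    ∃ w, G.Adj v w ∧ α v + α w = k := by
  by_contra! hne
  have hlt : ∀ w, G.Adj v w → k < α v + α w := fun w hw =>
    lt_of_le_of_ne (h.1 hw) (hne w hw).symm
  have hβ := h.2 (Function.update α v (α v - 1)) (by
    intro u
    by_cases hu : u = v
    · subst hu; simp
    · simp [hu]) (by
    intro i j hij
    by_cases hi : i = v
    · subst hi
      have hji : j ≠ i := hij.ne'
      have := hlt j hij
      simp only [Function.update_self, Function.update_of_ne hji]
      omega
    · by_cases hj : j = v
      · subst hj
        have := hlt i hij.symm
        simp only [Function.update_self, Function.update_of_ne hi]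
        omega
      · simpa [hi, hj] using h.1 hij)
  have := congrFun hβ v
  simp only [Function.update_self] at this
  omega

/-- A `k`-cover in which every vertex of positive weight lies on a tight edge is basic. -/
theorem IsCover.isBasicCover {n k : ℕ} {G : SimpleGraph (Fin n)} {α : Fin n → ℕ}
    (h : IsCover G k α) (htight : ∀ v, 0 < α v → ∃ w, G.Adj v w ∧ α v + α w = k) :
    IsBasicCover G k α := by
  refine ⟨h, fun β hβ hcov => funext fun v => le_antisymm (hβ v) ?_⟩
  rcases Nat.eq_zero_or_pos (α v) with h0 | hpos
  · omega
  · obtain ⟨w, hw, heq⟩ := htight v hpos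
    have h1 := hcov hw
    have h2 : β w ≤ α w := hβ w
    omega

/-- If the weights of the neighbours of `v` decrease along a finite chain of basic 1-covers and
`v` has positive weight in some member, then a single edge at `v` is tight for all members. -/
theorem exists_adj_forall_add_eq_one {ι : Type*} [LinearOrder ι] [Finite ι] {n : ℕ}
    {G : SimpleGraph (Fin n)} {c : ι → Fin n → ℕ} (hc : ∀ i, IsBasicCover G 1 (c i))
    {v : Fin n} (hanti : ∀ w, G.Adj v w → Antitone fun i => c i w) (hv : ∃ i, 0 < c i v) :
    ∃ w, G.Adj v w ∧ ∀ i, c i v + c i w = 1 := by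
  obtain ⟨m, hm, hmin⟩ := WellFounded.has_min (wellFounded_lt (α := ι)) {i | 0 < c i v} hv
  obtain ⟨w, hw, heq⟩ := (hc m).exists_adj_add_eq hm
  refine ⟨w, hw, fun i => ?_⟩
  have hcov := (hc i).1 hw
  have hiv := (hc i).le v
  have hiw := (hc i).le w
  have hm' : 0 < c m v := hm
  rcases lt_or_ge i m with him | him
  · have : ¬ 0 < c i v := fun h => hmin i h him
    omega
  · have : c i w ≤ c m w := hanti w hw him
    omega

/-- On the part `Aᶜ` of a bipartite graph, basic 1-covers are ordered oppositely to `pLe A`. -/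
theorem pLe.apply_le_of_notMem {n : ℕ} {G : SimpleGraph (Fin n)} {A : Finset (Fin n)}
    (hbip : ∀ i j : Fin n, G.Adj i j → (i ∈ A ↔ j ∉ A)) {α β : Fin n → ℕ}
    (hα : IsBasicCover G 1 α) (hβ : IsBasicCover G 1 β) (h : pLe A α β) {b : Fin n}
    (hb : b ∉ A) : β b ≤ α b := by
  rcases Nat.eq_zero_or_pos (β b) with h0 | hpos
  · omega
  · obtain ⟨a, ha, heq⟩ := hβ.exists_adj_add_eq hpos
    have h1 := h a ((hbip a b ha.symm).2 hb)
    have h2 := hα.1 ha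
    omega

/-- If `G` is a bipartite graph (with bipartition `A ∪ Aᶜ`, `|A| ≤ |Aᶜ|`,
no isolated vertices) and `c 1 ≤ … ≤ c d` is a multichain of basic 1-covers in the poset
`P(G)`, then the pointwise sum `v ↦ ∑ i, c i v` is a basic `d`-cover of `G`. -/
theorem sum_of_multichain_isBasicCover {n d : ℕ} (hd : 0 < d) (G : SimpleGraph (Fin n))
    (A : Finset (Fin n))
    (hbip : ∀ i j : Fin n, G.Adj i j → (i ∈ A ↔ j ∉ A))
    (hcard : A.card ≤ Aᶜ.card)
    (hiso : ∀ v : Fin n, ∃ w, G.Adj v w)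
    (c : Fin d → (Fin n → ℕ))
    (hbasic : ∀ i, IsBasicCover G 1 (c i))
    (hchain : ∀ i j : Fin d, i ≤ j → pLe A (c i) (c j)) :
    IsBasicCover G d (fun v => ∑ i, c i v) := by
  have htight : ∀ v, (∃ i, 0 < c i v) → ∃ w, G.Adj v w ∧ ∀ i, c i v + c i w = 1 := by
    intro v hv
    by_cases hvA : v ∈ A
    · exact exists_adj_forall_add_eq_one hbasic (fun w hw i j hij =>
        (hchain i j hij).apply_le_of_notMem hbip (hbasic i) (hbasic j)
          ((hbip v w hw).1 hvA)) hv
    · exact exists_adj_forall_add_eq_one (ι := (Fin d)ᵒᵈ) (c := fun i => c i.ofDual)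
        (fun i => hbasic i.ofDual) (fun w hw i j hij =>
          hchain j.ofDual i.ofDual hij w ((hbip w v hw.symm).2 hvA)) hv
  refine IsCover.isBasicCover (fun i j hij => ?_) fun v hv => ?_
  · calc d = ∑ _l : Fin d, 1 := by simp
      _ ≤ ∑ l, (c l i + c l j) := Finset.sum_le_sum fun l _ => (hbasic l).1 hij
      _ = _ := Finset.sum_add_distrib
  · obtain ⟨i, -, hi⟩ := Finset.exists_ne_zero_of_sum_ne_zero hv.ne'
    obtain ⟨w, hw, heq⟩ := htight v ⟨i, Nat.pos_of_ne_zero hi⟩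
    refine ⟨w, hw, ?_⟩
    rw [← Finset.sum_add_distrib]
    simp [heq]
end

section
/- Let G be a bipartite graph. If α_1 ≤ … ≤ α_d and β_1 ≤ … ≤ β_d are two multichains of basic 1-covers of G in the poset P(G) such that α_1+…+α_d = β_1+…+β_d as functions on the vertex set, then α_i = β_i for every i=1,…,d. In other words, the map sending a d-multichain of basic 1-covers to its pointwise sum is injective. -/
/-- Monotone `0`-`1` valued functions on a finite linear order are determined by their sum. -/
theorem Monotone.eq_of_sum_eq_of_le_one {ι : Type*} [Fintype ι] [LinearOrder ι] {f g : ι → ℕ}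
    (hf : Monotone f) (hg : Monotone g) (hf1 : ∀ i, f i ≤ 1) (hg1 : ∀ i, g i ≤ 1)
    (hsum : ∑ i, f i = ∑ i, g i) : f = g := by
  have hcomp : f ≤ g ∨ g ≤ f := by
    by_contra! hne
    simp only [Pi.le_def, not_forall, not_le] at hne
    obtain ⟨⟨i, hi⟩, ⟨j, hj⟩⟩ := hne
    have := hf1 i
    have := hg1 j
    rcases le_total i j with hij | hij
    · have := hf hij
      omega
    · have := hg hij
      omega
  funext i
  rcases hcomp with h | h
  · exact (Finset.sum_eq_sum_iff_of_le fun j _ => h j).1 hsum i (Finset.mem_univ i)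
  · exact ((Finset.sum_eq_sum_iff_of_le fun j _ => h j).1 hsum.symm i (Finset.mem_univ i)).symm

/-- A basic `k`-cover takes values at most `k`. -/
theorem IsBasicCover.apply_le {n k : ℕ} {G : SimpleGraph (Fin n)} {α : Fin n → ℕ}
    (hα : IsBasicCover G k α) (v : Fin n) : α v ≤ k := by
  have h := hα.2 (fun v => min (α v) k) (fun v => min_le_left _ _) (fun i j hij => by
    have := hα.1 hij
    dsimp only
    omega)
  exact min_eq_left_iff.1 (congrFun h v)

/-- Basic `k`-covers of a bipartite graph are determined by their values on one part. -/
theorem IsBasicCover.eq_of_eqOn {n k : ℕ} {G : SimpleGraph (Fin n)} {A : Finset (Fin n)}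
    (hbip : ∀ i j : Fin n, G.Adj i j → (i ∈ A ↔ j ∉ A)) {α β : Fin n → ℕ}
    (hα : IsBasicCover G k α) (hβ : IsBasicCover G k β) (h : ∀ a ∈ A, α a = β a) : α = β := by
  have hmin : IsCover G k (α ⊓ β) := fun i j hij => by
    have hi := hα.1 hij
    have hj := hβ.1 hij
    simp only [Pi.inf_apply]
    by_cases hA : i ∈ A
    · have := h i hA
      omega
    · have := h j (by_contra fun hj => hA ((hbip i j hij).2 hj))
      omega
  exact (hα.2 _ inf_le_left hmin).symm.trans (hβ.2 _ inf_le_right hmin)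

/-- For a bipartite graph `G`, if two `d`-multichains of basic 1-covers in
the poset `P(G)` have the same pointwise sum, then they coincide: the map sending a
`d`-multichain of basic 1-covers to its pointwise sum is injective. -/
theorem multichain_sum_injective {n d : ℕ} (G : SimpleGraph (Fin n))
    (A : Finset (Fin n))
    (hbip : ∀ i j : Fin n, G.Adj i j → (i ∈ A ↔ j ∉ A))
    (hcard : A.card ≤ Aᶜ.card)
    (hiso : ∀ v : Fin n, ∃ w, G.Adj v w)
    (c c' : Fin d → (Fin n → ℕ))
    (hbasic : ∀ i, IsBasicCover G 1 (c i)) (hbasic' : ∀ i, IsBasicCover G 1 (c' i))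
    (hchain : ∀ i j : Fin d, i ≤ j → pLe A (c i) (c j))
    (hchain' : ∀ i j : Fin d, i ≤ j → pLe A (c' i) (c' j))
    (hsum : (fun v => ∑ i, c i v) = fun v => ∑ i, c' i v) :
    c = c' := by
  funext i
  refine (hbasic i).eq_of_eqOn hbip (hbasic' i) fun a ha => ?_
  exact congrFun (Monotone.eq_of_sum_eq_of_le_one (f := fun i => c i a) (g := fun i => c' i a)
    (fun i j hij => hchain i j hij a ha) (fun i j hij => hchain' i j hij a ha)
    (fun i => (hbasic i).apply_le a) (fun i => (hbasic' i).apply_le a) (congrFun hsum a)) i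
end

section
/- Let G be a bipartite graph, let R=K[y_α : α a basic 1-cover of G] be the polynomial ring over K whose variables are indexed by the basic 1-covers of G, and let Φ:R→Ā(G) be the K-algebra homomorphism sending y_α to the class of x_1^{α(1)}⋯x_n^{α(n)}t in Ā(G). Then ker Φ is generated by the set of polynomials y_α y_β − y_{α⊓β} y_{α⊔β}, for α,β ranging over incomparable pairs of basic 1-covers such that both α⊓β and α⊔β are basic 1-covers, together with the monomials y_α y_β for incomparable pairs α,β such that α⊓β or α⊔β fails to be a basic 1-cover. -/
set_option synthInstance.maxHeartbeats 1000000
set_option maxHeartbeats 1000000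

open MvPolynomial

/-- The polynomial ring `S[t] = K[x_1,…,x_n][t]`, realised as a polynomial ring in the
variables `some i ↦ x_i` and `none ↦ t`. -/
abbrev St (K : Type*) [Field K] (n : ℕ) := MvPolynomial (Option (Fin n)) K

/-- The element `x₁^{α 1} ⋯ x_n^{α n} · t^k` of `S[t]`. -/
noncomputable def coverMonomial (K : Type*) [Field K] {n : ℕ} (α : Fin n → ℕ) (k : ℕ) :
    St K n :=
  MvPolynomial.monomial (Finsupp.equivFunOnFinite.symm (fun o => o.elim k α)) 1

/-- The symbolic Rees algebra `A(G) = ⊕_k J(G)^{(k)} t^k = K[x^α t^k : α a k-cover]` of the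
cover ideal of `G`, as a subalgebra of `S[t]`. -/
noncomputable def symbolicRees (K : Type*) [Field K] {n : ℕ} (G : SimpleGraph (Fin n)) :
    Subalgebra K (St K n) :=
  Algebra.adjoin K {p | ∃ k : ℕ, ∃ α : Fin n → ℕ, IsCover G k α ∧ p = coverMonomial K α k}

/-- The ideal `m·A(G)` of `A(G)`, generated by the variables `x_i = x_i t^0`. -/
noncomputable def irrelevantIdeal (K : Type*) [Field K] {n : ℕ} (G : SimpleGraph (Fin n)) :
    Ideal (symbolicRees K G) :=
  Ideal.span {a : symbolicRees K G | ∃ i : Fin n, (a : St K n) = MvPolynomial.X (some i)}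

/-- The symbolic fiber cone `Ā(G) = A(G)/mA(G)` of the cover ideal of `G`. -/
noncomputable def symbolicFiberCone (K : Type*) [Field K] {n : ℕ}
    (G : SimpleGraph (Fin n)) : Type _ :=
  symbolicRees K G ⧸ irrelevantIdeal K G

noncomputable instance (K : Type*) [Field K] {n : ℕ} (G : SimpleGraph (Fin n)) :
    CommRing (symbolicFiberCone K G) :=
  Ideal.Quotient.commRing (irrelevantIdeal K G)

/-- `α ⊓ β`: minimum on `A`, maximum on the complement of `A`. -/
def sqcap {n : ℕ} (A : Finset (Fin n)) (α β : Fin n → ℕ) : Fin n → ℕ :=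
  fun v => if v ∈ A then min (α v) (β v) else max (α v) (β v)

/-- `α ⊔ β`: maximum on `A`, minimum on the complement of `A`. -/
def sqcup {n : ℕ} (A : Finset (Fin n)) (α β : Fin n → ℕ) : Fin n → ℕ :=
  fun v => if v ∈ A then max (α v) (β v) else min (α v) (β v)

/-- The set `P(G)` of basic 1-covers of `G`. -/
def BasicOneCover {n : ℕ} (G : SimpleGraph (Fin n)) : Type _ :=
  {α : Fin n → ℕ // IsBasicCover G 1 α}

noncomputable instance (K : Type*) [Field K] {n : ℕ} (G : SimpleGraph (Fin n)) :
    Algebra K (symbolicFiberCone K G) :=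
  Ideal.Quotient.algebra K

/-- The natural presentation `Φ : R = K[P(G)] → Ā(G)`, sending the variable indexed by a
basic 1-cover `α` to the residue class of `x_1^{α 1} ⋯ x_n^{α n} t`. -/
noncomputable def Phi (K : Type*) [Field K] {n : ℕ} (G : SimpleGraph (Fin n)) :
    MvPolynomial (BasicOneCover G) K →ₐ[K] symbolicFiberCone K G :=
  MvPolynomial.aeval fun α : BasicOneCover G =>
    Ideal.Quotient.mk (irrelevantIdeal K G)
      ⟨coverMonomial K α.1 1, Algebra.subset_adjoin ⟨1, α.1, α.2.1, rfl⟩⟩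

/-- The straightening relations: for each pair `α`, `β` of incomparable basic 1-covers, the
relation `y_α y_β − y_{α⊓β} y_{α⊔β}` if both `α⊓β` and `α⊔β` are basic 1-covers, and the
monomial `y_α y_β` otherwise. -/
noncomputable def straighteningRelations (K : Type*) [Field K] {n : ℕ}
    (G : SimpleGraph (Fin n)) (A : Finset (Fin n)) :
    Set (MvPolynomial (BasicOneCover G) K) :=
  {p | ∃ α β : BasicOneCover G, ¬ pLe A α.1 β.1 ∧ ¬ pLe A β.1 α.1 ∧
    ((∃ (h1 : IsBasicCover G 1 (sqcap A α.1 β.1)) (h2 : IsBasicCover G 1 (sqcup A α.1 β.1)),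
        p = MvPolynomial.X α * MvPolynomial.X β -
          MvPolynomial.X (⟨sqcap A α.1 β.1, h1⟩ : BasicOneCover G) *
          MvPolynomial.X (⟨sqcup A α.1 β.1, h2⟩ : BasicOneCover G)) ∨
     ((¬ IsBasicCover G 1 (sqcap A α.1 β.1) ∨ ¬ IsBasicCover G 1 (sqcup A α.1 β.1)) ∧
        p = MvPolynomial.X α * MvPolynomial.X β))}

section Covers

variable {n : ℕ} {G : SimpleGraph (Fin n)} {A : Finset (Fin n)}

lemma IsCover.mono {k : ℕ} {α β : Fin n → ℕ} (h : IsCover G k α) (hle : α ≤ β) :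
    IsCover G k β := fun i j hij =>
  (h hij).trans (Nat.add_le_add (hle i) (hle j))

lemma IsCover.add {k l : ℕ} {α β : Fin n → ℕ} (hα : IsCover G k α) (hβ : IsCover G l β) :
    IsCover G (k + l) (α + β) := fun i j hij => by
  have h1 := hα hij
  have h2 := hβ hij
  simp only [Pi.add_apply]
  omega

/-- Every vertex in the support of a basic 1-cover has value one and lies on a tight edge. -/
lemma IsBasicCover.exists_adj {α : Fin n → ℕ} (h : IsBasicCover G 1 α) {v : Fin n}
    (hv : α v ≠ 0) : α v = 1 ∧ ∃ w, G.Adj v w ∧ α w = 0 := by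
  have hnot : ¬ IsCover G 1 (Function.update α v (α v - 1)) := by
    intro hc
    have := congrFun (h.2 _ (by
      intro i
      by_cases hi : i = v
      · subst hi; simp
      · simp [hi]) hc) v
    simp at this
    omega
  unfold IsCover at hnot
  push Not at hnot
  obtain ⟨i, j, hij, hlt⟩ := hnot
  have hc := h.1 hij
  have hne := hij.ne
  by_cases hi : i = v
  · subst hi
    rw [Function.update_self, Function.update_of_ne hne.symm] at hlt
    exact ⟨by omega, j, hij, by omega⟩
  · by_cases hj : j = v
    · subst hj
      rw [Function.update_self, Function.update_of_ne hne] at hlt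
      exact ⟨by omega, i, hij.symm, by omega⟩
    · rw [Function.update_of_ne hi, Function.update_of_ne hj] at hlt
      omega

lemma IsBasicCover.le_one {α : Fin n → ℕ} (h : IsBasicCover G 1 α) (v : Fin n) : α v ≤ 1 := by
  by_cases hv : α v = 0
  · omega
  · exact (h.exists_adj hv).1.le

/-- A cover that is not basic remains a cover after lowering its value at some vertex. -/
lemma IsCover.exists_eq_add_single {k : ℕ} {α : Fin n → ℕ} (h : IsCover G k α)
    (hb : ¬ IsBasicCover G k α) :
    ∃ (β : Fin n → ℕ) (v : Fin n), IsCover G k β ∧ α = β + Pi.single v 1 := by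
  unfold IsBasicCover at hb
  push Not at hb
  obtain ⟨β, hle, hβ, hne⟩ := hb h
  obtain ⟨v, hv⟩ := Function.ne_iff.mp hne
  have hlt : β v < α v := lt_of_le_of_ne (hle v) hv
  refine ⟨Function.update α v (α v - 1), v, hβ.mono fun i => ?_, funext fun i => ?_⟩
  · by_cases hi : i = v
    · subst hi; simp only [Function.update_self]; omega
    · simpa [hi] using hle i
  · by_cases hi : i = v
    · subst hi; simp only [Pi.add_apply, Function.update_self, Pi.single_eq_same]; omega
    · simp [hi]

lemma sqcap_add_sqcup (α β : Fin n → ℕ) : sqcap A α β + sqcup A α β = α + β := by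
  funext v
  simp only [sqcap, sqcup, Pi.add_apply]
  split_ifs
  · exact min_add_max _ _
  · rw [add_comm]; exact min_add_max _ _

lemma isCover_sqcap (hbip : ∀ i j : Fin n, G.Adj i j → (i ∈ A ↔ j ∉ A)) {k : ℕ}
    {α β : Fin n → ℕ} (hα : IsCover G k α) (hβ : IsCover G k β) :
    IsCover G k (sqcap A α β) := by
  intro i j hij
  have h1 := hα hij
  have h2 := hβ hij
  have h3 := hbip i j hij
  simp only [sqcap]
  split_ifs <;> first | omega | tauto

lemma isCover_sqcup (hbip : ∀ i j : Fin n, G.Adj i j → (i ∈ A ↔ j ∉ A)) {k : ℕ}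
    {α β : Fin n → ℕ} (hα : IsCover G k α) (hβ : IsCover G k β) :
    IsCover G k (sqcup A α β) := by
  intro i j hij
  have h1 := hα hij
  have h2 := hβ hij
  have h3 := hbip i j hij
  simp only [sqcup]
  split_ifs <;> first | omega | tauto

/-- The order on basic 1-covers is reversed on the second colour class. -/
lemma pLe.compl (hbip : ∀ i j : Fin n, G.Adj i j → (i ∈ A ↔ j ∉ A)) {α β : Fin n → ℕ}
    (hα : IsBasicCover G 1 α) (hβ : IsBasicCover G 1 β) (h : pLe A α β) : pLe Aᶜ β α := by
  intro b hb
  rw [Finset.mem_compl] at hb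
  by_cases hv : β b = 0
  · omega
  · obtain ⟨h1, w, hw, hw0⟩ := hβ.exists_adj hv
    have hwA : w ∈ A := by
      have := hbip b w hw
      tauto
    have := h w hwA
    have := hα.1 hw
    omega

lemma pLe.antisymm (hbip : ∀ i j : Fin n, G.Adj i j → (i ∈ A ↔ j ∉ A)) {α β : Fin n → ℕ}
    (hα : IsBasicCover G 1 α) (hβ : IsBasicCover G 1 β) (h : pLe A α β) (h' : pLe A β α) :
    α = β := by
  funext v
  by_cases hv : v ∈ A
  · exact le_antisymm (h v hv) (h' v hv)
  · have hv' : v ∈ Aᶜ := Finset.mem_compl.mpr hv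
    exact le_antisymm (h'.compl hbip hβ hα v hv') (h.compl hbip hα hβ v hv')

/-- The size of the restriction of a cover to the first colour class. -/
def rankOn (A : Finset (Fin n)) (α : Fin n → ℕ) : ℕ := ∑ a ∈ A, α a

lemma rankOn_le {α : Fin n → ℕ} (h : IsBasicCover G 1 α) : rankOn A α ≤ n := by
  calc rankOn A α ≤ ∑ a ∈ A, 1 := Finset.sum_le_sum fun a _ => h.le_one a
    _ ≤ n := by simpa using Finset.card_le_univ A

lemma pLe_of_rankOn_le {α β : Fin n → ℕ} (h : pLe A α β) (hr : rankOn A β ≤ rankOn A α) :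
    pLe A β α := fun a ha =>
  ((Finset.sum_eq_sum_iff_of_le h).mp (le_antisymm (Finset.sum_le_sum h) hr) a ha).ge

lemma rankOn_sqcap_add_rankOn_sqcup (α β : Fin n → ℕ) :
    rankOn A (sqcap A α β) + rankOn A (sqcup A α β) = rankOn A α + rankOn A β := by
  simp only [rankOn, ← Finset.sum_add_distrib]
  exact Finset.sum_congr rfl fun a _ => congrFun (sqcap_add_sqcup α β) a

lemma rankOn_sqcap_lt_left {α β : Fin n → ℕ} (h : ¬ pLe A α β) :
    rankOn A (sqcap A α β) < rankOn A α := by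
  unfold pLe at h
  push Not at h
  obtain ⟨a, ha, hlt⟩ := h
  refine Finset.sum_lt_sum (fun i hi => ?_) ⟨a, ha, ?_⟩
  · simp [sqcap, hi]
  · simpa [sqcap, ha] using hlt

lemma rankOn_sqcap_lt_right {α β : Fin n → ℕ} (h : ¬ pLe A β α) :
    rankOn A (sqcap A α β) < rankOn A β := by
  unfold pLe at h
  push Not at h
  obtain ⟨a, ha, hlt⟩ := h
  refine Finset.sum_lt_sum (fun i hi => ?_) ⟨a, ha, ?_⟩
  · simp [sqcap, hi]
  · simpa [sqcap, ha] using hlt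

/-- The defect of a basic 1-cover, which decreases under straightening. -/
def defect (A : Finset (Fin n)) (α : Fin n → ℕ) : ℕ := rankOn A α * (n - rankOn A α)

lemma defect_sqcap_add_defect_sqcup_lt {α β : Fin n → ℕ} (hα : IsBasicCover G 1 α)
    (hβ : IsBasicCover G 1 β) (h1 : IsBasicCover G 1 (sqcap A α β))
    (h2 : IsBasicCover G 1 (sqcup A α β)) (h : ¬ pLe A α β) (h' : ¬ pLe A β α) :
    defect A (sqcap A α β) + defect A (sqcup A α β) < defect A α + defect A β := by
  have e := rankOn_sqcap_add_rankOn_sqcup (A := A) α β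
  have l1 := rankOn_sqcap_lt_left h
  have l2 := rankOn_sqcap_lt_right h'
  have b1 := rankOn_le (A := A) hα
  have b2 := rankOn_le (A := A) hβ
  have b3 := rankOn_le (A := A) h1
  have b4 := rankOn_le (A := A) h2
  unfold defect
  generalize rankOn A (sqcap A α β) = p at *
  generalize rankOn A (sqcup A α β) = q at *
  generalize rankOn A α = a at *
  generalize rankOn A β = b at *
  zify [b1, b2, b3, b4]
  zify at e l1 l2
  obtain hq : (q : ℤ) = a + b - p := by linarith
  rw [hq]
  nlinarith [mul_pos (sub_pos.mpr l1) (sub_pos.mpr l2)]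

end Covers

section Standard

variable {n : ℕ} {G : SimpleGraph (Fin n)} {A : Finset (Fin n)}

/-- The exponent vector of `x^α t^k`. -/
noncomputable def coverExponent (α : Fin n → ℕ) (k : ℕ) : Option (Fin n) →₀ ℕ :=
  Finsupp.equivFunOnFinite.symm fun o => o.elim k α

@[simp] lemma coverExponent_none (α : Fin n → ℕ) (k : ℕ) : coverExponent α k none = k := rfl

@[simp] lemma coverExponent_some (α : Fin n → ℕ) (k : ℕ) (v : Fin n) :
    coverExponent α k (some v) = α v := rfl

/-- The exponent vector of the image in `S[t]` of a monomial in the basic 1-covers. -/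
noncomputable def imageExponent (G : SimpleGraph (Fin n)) :
    (BasicOneCover G →₀ ℕ) →+ (Option (Fin n) →₀ ℕ) :=
  Finsupp.weight fun α : BasicOneCover G => coverExponent α.1 1

lemma imageExponent_apply (s : BasicOneCover G →₀ ℕ) (o : Option (Fin n)) :
    imageExponent G s o = ∑ α ∈ s.support, s α * coverExponent α.1 1 o := by
  simp [imageExponent, Finsupp.weight_apply, Finsupp.sum, Finsupp.finsetSum_apply]

@[simp] lemma imageExponent_single (α : BasicOneCover G) (m : ℕ) :
    imageExponent G (Finsupp.single α m) = m • coverExponent α.1 1 := by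
  simp [imageExponent, Finsupp.weight_apply]

/-- A monomial in the basic 1-covers is standard if its support is a chain. -/
def IsStandard (A : Finset (Fin n)) (s : BasicOneCover G →₀ ℕ) : Prop :=
  ∀ α ∈ s.support, ∀ β ∈ s.support, pLe A α.1 β.1 ∨ pLe A β.1 α.1

lemma IsStandard.compl (hbip : ∀ i j : Fin n, G.Adj i j → (i ∈ A ↔ j ∉ A))
    {s : BasicOneCover G →₀ ℕ} (hs : IsStandard A s) : IsStandard Aᶜ s := fun α hα β hβ =>
  (hs α hα β hβ).symm.imp (fun h => h.compl hbip β.2 α.2) fun h => h.compl hbip α.2 β.2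

lemma IsStandard.mono {s s' : BasicOneCover G →₀ ℕ} (hs : IsStandard A s)
    (h : s'.support ⊆ s.support) : IsStandard A s' := fun α hα β hβ =>
  hs α (h hα) β (h hβ)

lemma IsStandard.exists_tight_of_mem (hbip : ∀ i j : Fin n, G.Adj i j → (i ∈ A ↔ j ∉ A))
    {s : BasicOneCover G →₀ ℕ} (hs : IsStandard A s) {v : Fin n} (hvA : v ∈ A)
    (hv : imageExponent G s (some v) ≠ 0) :
    ∃ w, G.Adj v w ∧ imageExponent G s (some v) + imageExponent G s (some w) =
      imageExponent G s none := by
  classical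
  rw [imageExponent_apply] at hv
  obtain ⟨γ, hγ, hγv⟩ := Finset.exists_ne_zero_of_sum_ne_zero hv
  have hγv' : γ.1 v ≠ 0 := fun h => hγv (by simp [h])
  obtain ⟨α, hα, hmin⟩ := Finset.exists_min_image (s.support.filter fun α => α.1 v ≠ 0)
    (fun α => rankOn A α.1) ⟨γ, Finset.mem_filter.mpr ⟨hγ, hγv'⟩⟩
  rw [Finset.mem_filter] at hα
  obtain ⟨h1, w, hw, hw0⟩ := α.2.exists_adj hα.2
  refine ⟨w, hw, ?_⟩
  simp only [imageExponent_apply, ← Finset.sum_add_distrib]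
  refine Finset.sum_congr rfl fun β hβ => ?_
  simp only [coverExponent_some, coverExponent_none, ← mul_add]
  congr 1
  have hβv := β.2.le_one v
  have hβw := β.2.le_one w
  have hβc := β.2.1 hw
  by_cases h0 : β.1 v = 0
  · omega
  · have hle : pLe A α.1 β.1 := by
      rcases hs α hα.1 β hβ with h | h
      · exact h
      · exact pLe_of_rankOn_le h (hmin β (Finset.mem_filter.mpr ⟨hβ, h0⟩))
    have hwA : w ∈ Aᶜ := by
      rw [Finset.mem_compl]
      exact (hbip v w hw).mp hvA
    have := hle.compl hbip α.2 β.2 w hwA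
    omega

/-- The image of a standard monomial of degree `k` is a basic `k`-cover: every vertex of its
support lies on a tight edge. -/
lemma IsStandard.exists_tight (hbip : ∀ i j : Fin n, G.Adj i j → (i ∈ A ↔ j ∉ A))
    {s : BasicOneCover G →₀ ℕ} (hs : IsStandard A s) {v : Fin n}
    (hv : imageExponent G s (some v) ≠ 0) :
    ∃ w, G.Adj v w ∧ imageExponent G s (some v) + imageExponent G s (some w) =
      imageExponent G s none := by
  by_cases hvA : v ∈ A
  · exact hs.exists_tight_of_mem hbip hvA hv
  · refine (hs.compl hbip).exists_tight_of_mem (fun i j hij => ?_) (Finset.mem_compl.mpr hvA) hv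
    have := hbip i j hij
    simp only [Finset.mem_compl]
    tauto

/-- A nonzero standard monomial is divisible by the basic 1-cover whose restriction to `A` is the
support of the image of the monomial. -/
lemma IsStandard.exists_top {s : BasicOneCover G →₀ ℕ} (hs : IsStandard A s) (h0 : s ≠ 0) :
    ∃ α ∈ s.support, ∀ a ∈ A, α.1 a = 0 ↔ imageExponent G s (some a) = 0 := by
  obtain ⟨α, hα, hmax⟩ := Finset.exists_max_image s.support
    (fun α => rankOn A α.1) (Finsupp.support_nonempty_iff.mpr h0)
  refine ⟨α, hα, fun a ha => ?_⟩
  simp only [imageExponent_apply, Finset.sum_eq_zero_iff, coverExponent_some]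
  constructor
  · intro h β hβ
    have hle : pLe A β.1 α.1 := by
      rcases hs α hα β hβ with h | h
      · exact pLe_of_rankOn_le h (hmax β hβ)
      · exact h
    have := hle a ha
    rw [show β.1 a = 0 by omega, mul_zero]
  · intro h
    exact (mul_eq_zero.mp (h α hα)).resolve_left (Finsupp.mem_support_iff.mp hα)

lemma imageExponent_none_eq_zero {s : BasicOneCover G →₀ ℕ} (h : imageExponent G s none = 0) :
    s = 0 := by
  rw [imageExponent_apply, Finset.sum_eq_zero_iff] at h
  ext α
  by_contra hα
  exact hα (by simpa using h α (Finsupp.mem_support_iff.mpr hα))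

/-- Standard monomials are determined by their images. -/
lemma IsStandard.eq_of_imageExponent_eq (hbip : ∀ i j : Fin n, G.Adj i j → (i ∈ A ↔ j ∉ A))
    {s s' : BasicOneCover G →₀ ℕ} (hs : IsStandard A s) (hs' : IsStandard A s')
    (h : imageExponent G s = imageExponent G s') : s = s' := by
  classical
  induction hk : imageExponent G s none generalizing s s' with
  | zero =>
    rw [imageExponent_none_eq_zero hk, imageExponent_none_eq_zero (s := s') (by rw [← h, hk])]
  | succ k ih =>
    have h0 : s ≠ 0 := by rintro rfl; simp at hk
    have h0' : s' ≠ 0 := by rintro rfl; simp [h] at hk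
    obtain ⟨α, hα, hαtop⟩ := hs.exists_top h0
    obtain ⟨β, hβ, hβtop⟩ := hs'.exists_top h0'
    have hA : ∀ a ∈ A, α.1 a = β.1 a := fun a ha => by
      have h1 := hαtop a ha
      rw [h, ← hβtop a ha] at h1
      have := α.2.le_one a
      have := β.2.le_one a
      omega
    obtain rfl : α = β := Subtype.ext
      (pLe.antisymm hbip α.2 β.2 (fun a ha => (hA a ha).le) fun a ha => (hA a ha).ge)
    have split : ∀ t : BasicOneCover G →₀ ℕ, α ∈ t.support →
        t - Finsupp.single α 1 + Finsupp.single α 1 = t := fun t ht => by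
      refine tsub_add_cancel_of_le ?_
      rw [Finsupp.single_le_iff]
      exact Nat.one_le_iff_ne_zero.mpr (Finsupp.mem_support_iff.mp ht)
    have hsub : ∀ t : BasicOneCover G →₀ ℕ,
        (t - Finsupp.single α 1).support ⊆ t.support := fun t =>
      Finsupp.support_tsub
    rw [← split s hα, ← split s' hβ] at h ⊢
    rw [map_add, map_add, add_left_inj] at h
    rw [ih (hs.mono (hsub s)) (hs'.mono (hsub s')) h]
    rw [← split s hα, map_add] at hk
    simpa using hk

end Standard

section Algebra

variable (K : Type*) [Field K] {n : ℕ} {G : SimpleGraph (Fin n)} {A : Finset (Fin n)}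

lemma coverMonomial_eq (α : Fin n → ℕ) (k : ℕ) :
    coverMonomial K α k = monomial (coverExponent α k) 1 := rfl

lemma coverMonomial_mul (α β : Fin n → ℕ) (k l : ℕ) :
    coverMonomial K α k * coverMonomial K β l = coverMonomial K (α + β) (k + l) := by
  simp only [coverMonomial_eq, monomial_mul, mul_one]
  congr 2
  ext o
  cases o <;> simp

lemma coverMonomial_single (v : Fin n) :
    coverMonomial K (Pi.single v 1) 0 = X (some v) := by
  rw [coverMonomial_eq, X]
  congr 2
  ext o
  cases o with
  | none => simp
  | some w => simp [Pi.single_apply, Finsupp.single_apply, eq_comm]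

/-- The monomial `x^α t^k` as an element of the symbolic Rees algebra. -/
noncomputable def reesMonomial {k : ℕ} {α : Fin n → ℕ} (h : IsCover G k α) : symbolicRees K G :=
  ⟨coverMonomial K α k, Algebra.subset_adjoin ⟨k, α, h, rfl⟩⟩

lemma reesMonomial_mem_irrelevantIdeal {k : ℕ} {β : Fin n → ℕ} (hβ : IsCover G k β)
    (v : Fin n) {p : symbolicRees K G}
    (hp : (p : St K n) = coverMonomial K (β + Pi.single v 1) k) : p ∈ irrelevantIdeal K G := by
  have h0 : IsCover G 0 (Pi.single v 1) := fun _ _ _ => Nat.zero_le _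
  have : p = reesMonomial K hβ * reesMonomial K h0 := by
    apply Subtype.ext
    rw [hp]
    exact (coverMonomial_mul K β (Pi.single v 1) k 0).symm
  rw [this]
  exact Ideal.mul_mem_left _ _ (Ideal.subset_span ⟨v, coverMonomial_single K v⟩)

/-- Exponents of elements of the symbolic Rees algebra are covers. -/
lemma isCover_of_mem_symbolicRees {p : St K n} (hp : p ∈ symbolicRees K G)
    {m : Option (Fin n) →₀ ℕ} (hm : coeff m p ≠ 0) :
    IsCover G (m none) fun v => m (some v) := by
  classical
  induction hp using Algebra.adjoin_induction generalizing m with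
  | mem p hp =>
    obtain ⟨k, α, hα, rfl⟩ := hp
    rw [coverMonomial_eq, coeff_monomial] at hm
    obtain rfl : coverExponent α k = m := by
      by_contra h
      simp [h] at hm
    exact hα
  | algebraMap r =>
    rw [algebraMap_eq, coeff_C] at hm
    obtain rfl : 0 = m := by
      by_contra h
      simp [h] at hm
    exact fun _ _ _ => Nat.zero_le _
  | add p q _ _ hp hq =>
    rw [coeff_add] at hm
    by_cases h : coeff m p = 0
    · exact hq (by simpa [h] using hm)
    · exact hp h
  | mul p q _ _ hp hq =>
    rw [coeff_mul] at hm
    obtain ⟨⟨a, b⟩, hab, hne⟩ := Finset.exists_ne_zero_of_sum_ne_zero hm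
    rw [Finset.HasAntidiagonal.mem_antidiagonal] at hab
    obtain rfl := hab
    exact (hp (left_ne_zero_of_mul hne)).add (hq (right_ne_zero_of_mul hne))

/-- Elements of `m A(G)` have no terms supported on basic covers. -/
lemma coeff_eq_zero_of_mem_irrelevantIdeal {p : symbolicRees K G}
    (hp : p ∈ irrelevantIdeal K G) {m : Option (Fin n) →₀ ℕ}
    (hm : ∀ v, m (some v) ≠ 0 → ∃ w, G.Adj v w ∧ m (some v) + m (some w) = m none) :
    coeff m (p : St K n) = 0 := by
  classical
  rw [irrelevantIdeal, Ideal.span, Submodule.mem_span_set'] at hp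
  obtain ⟨l, f, g, rfl⟩ := hp
  rw [AddSubmonoidClass.coe_finsetSum, coeff_sum]
  refine Finset.sum_eq_zero fun i _ => ?_
  obtain ⟨v, hv⟩ := (g i).2
  rw [smul_eq_mul, MulMemClass.coe_mul, hv, coeff_mul_X']
  split_ifs with hmem
  · rw [Finsupp.mem_support_iff] at hmem
    obtain ⟨w, hw, hsum⟩ := hm v hmem
    by_contra hne
    have := isCover_of_mem_symbolicRees K (f i).2 hne hw
    simp [hw.ne] at this
    omega
  · rfl

/-- The lift of `Φ` to the symbolic Rees algebra. -/
noncomputable def reesLift (G : SimpleGraph (Fin n)) :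
    MvPolynomial (BasicOneCover G) K →ₐ[K] symbolicRees K G :=
  aeval fun α : BasicOneCover G => reesMonomial K α.2.1

lemma Phi_apply (p : MvPolynomial (BasicOneCover G) K) :
    Phi K G p = Ideal.Quotient.mk (irrelevantIdeal K G) (reesLift K G p) := by
  let π : symbolicRees K G →ₐ[K] symbolicFiberCone K G :=
    Ideal.Quotient.mkₐ K (irrelevantIdeal K G)
  have : Phi K G = π.comp (reesLift K G) := by
    apply MvPolynomial.algHom_ext
    intro α
    rw [AlgHom.comp_apply, reesLift, aeval_X]
    exact aeval_X _ α
  rw [this]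
  rfl

lemma mem_ker_Phi_iff (p : MvPolynomial (BasicOneCover G) K) :
    p ∈ RingHom.ker (Phi K G).toRingHom ↔ reesLift K G p ∈ irrelevantIdeal K G := by
  rw [RingHom.mem_ker, ← Ideal.Quotient.eq_zero_iff_mem, ← Phi_apply]
  rfl

lemma reesLift_X (α : BasicOneCover G) :
    (reesLift K G (X α) : St K n) = coverMonomial K α.1 1 := by
  rw [reesLift, aeval_X]
  rfl

lemma reesLift_X_mul_X_sub (α β γ δ : BasicOneCover G) (h : α.1 + β.1 = γ.1 + δ.1) :
    reesLift K G (X α * X β - X γ * X δ) = 0 := by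
  apply Subtype.ext
  rw [map_sub, map_mul, map_mul]
  simp only [AddSubgroupClass.coe_sub, MulMemClass.coe_mul, reesLift_X, coverMonomial_mul,
    h, sub_self, ZeroMemClass.coe_zero]

lemma reesLift_monomial (s : BasicOneCover G →₀ ℕ) (c : K) :
    (reesLift K G (monomial s c) : St K n) = monomial (imageExponent G s) c := by
  induction s using Finsupp.induction_linear generalizing c with
  | zero =>
    rw [map_zero, ← C_apply, ← algebraMap_eq, AlgHom.commutes]
    rfl
  | add s t hs ht =>
    rw [← mul_one c, ← monomial_mul, map_mul, MulMemClass.coe_mul, hs, ht, monomial_mul, map_add]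
  | single α m =>
    rw [← mul_one c, ← C_mul_monomial, ← X_pow_eq_monomial, map_mul, map_pow,
      MulMemClass.coe_mul, SubmonoidClass.coe_pow, reesLift_X, coverMonomial_eq, monomial_pow,
      ← algebraMap_eq, AlgHom.commutes, imageExponent_single, one_pow, ← C_mul_monomial]
    rfl

lemma straighteningRelations_le_ker (hbip : ∀ i j : Fin n, G.Adj i j → (i ∈ A ↔ j ∉ A)) :
    Ideal.span (straighteningRelations K G A) ≤ RingHom.ker (Phi K G).toRingHom := by
  rw [Ideal.span_le]
  rintro p ⟨α, β, -, -, ⟨h1, h2, rfl⟩ | ⟨h, rfl⟩⟩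
  all_goals rw [SetLike.mem_coe, mem_ker_Phi_iff]
  · have h := reesLift_X_mul_X_sub K α β ⟨_, h1⟩ ⟨_, h2⟩ (sqcap_add_sqcup α.1 β.1).symm
    exact h.symm ▸ zero_mem (irrelevantIdeal K G)
  · have e : (reesLift K G (X α * X β) : St K n) =
        coverMonomial K (sqcap A α.1 β.1 + sqcup A α.1 β.1) (1 + 1) := by
      rw [map_mul, MulMemClass.coe_mul, reesLift_X, reesLift_X, coverMonomial_mul,
        sqcap_add_sqcup]
    have c1 := isCover_sqcap hbip α.2.1 β.2.1
    have c2 := isCover_sqcup hbip α.2.1 β.2.1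
    rcases h with h | h
    · obtain ⟨γ, v, hγ, hv⟩ := c1.exists_eq_add_single h
      exact reesMonomial_mem_irrelevantIdeal K (hγ.add c2) v (by rw [e, hv, add_right_comm])
    · obtain ⟨γ, v, hγ, hv⟩ := c2.exists_eq_add_single h
      exact reesMonomial_mem_irrelevantIdeal K (c1.add hγ) v (by rw [e, hv, add_assoc])

/-- Straightening: modulo the relations a monomial is zero or a standard monomial. -/
lemma monomial_straighten (s : BasicOneCover G →₀ ℕ) :
    monomial s (1 : K) ∈ Ideal.span (straighteningRelations K G A) ∨
    ∃ s' : BasicOneCover G →₀ ℕ, IsStandard A s' ∧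
      monomial s (1 : K) - monomial s' 1 ∈ Ideal.span (straighteningRelations K G A) := by
  classical
  induction hN : Finsupp.weight (fun α : BasicOneCover G => defect A α.1) s
    using Nat.strong_induction_on generalizing s with
  | _ N ih =>
  by_cases hs : IsStandard A s
  · exact Or.inr ⟨s, hs, by simp⟩
  unfold IsStandard at hs
  push Not at hs
  obtain ⟨α, hα, β, hβ, hαβ, hβα⟩ := hs
  have hne : α ≠ β := by
    rintro rfl
    exact hαβ fun a _ => le_rfl
  obtain ⟨r, rfl⟩ : ∃ r, s = Finsupp.single α 1 + Finsupp.single β 1 + r := by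
    refine exists_add_of_le fun γ => ?_
    rw [Finsupp.mem_support_iff] at hα hβ
    simp only [Finsupp.add_apply, Finsupp.single_apply]
    split_ifs with h1 h2 h2
    · exact absurd (h1.trans h2.symm) hne
    · subst h1; omega
    · subst h2; omega
    · omega
  have hmon : ∀ γ δ : BasicOneCover G,
      monomial (Finsupp.single γ 1 + Finsupp.single δ 1 + r) (1 : K) =
        monomial r 1 * (X γ * X δ) := fun γ δ => by
    simp only [X, monomial_mul, mul_one]
    rw [add_comm r]
  by_cases hb : IsBasicCover G 1 (sqcap A α.1 β.1) ∧ IsBasicCover G 1 (sqcup A α.1 β.1)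
  · obtain ⟨h1, h2⟩ := hb
    obtain ⟨γ, hγ⟩ : ∃ γ : BasicOneCover G, γ = ⟨_, h1⟩ := ⟨_, rfl⟩
    obtain ⟨δ, hδ⟩ : ∃ δ : BasicOneCover G, δ = ⟨_, h2⟩ := ⟨_, rfl⟩
    have hrel : monomial (Finsupp.single α 1 + Finsupp.single β 1 + r) (1 : K) -
        monomial (Finsupp.single γ 1 + Finsupp.single δ 1 + r) 1 ∈
          Ideal.span (straighteningRelations K G A) := by
      rw [hmon, hmon, ← mul_sub]
      refine Ideal.mul_mem_left _ _ (Ideal.subset_span ⟨α, β, hαβ, hβα, Or.inl ⟨h1, h2, ?_⟩⟩)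
      rw [hγ, hδ]
      rfl
    have hlt : defect A γ.1 + defect A δ.1 < defect A α.1 + defect A β.1 := by
      rw [hγ, hδ]
      exact defect_sqcap_add_defect_sqcup_lt α.2 β.2 h1 h2 hαβ hβα
    rcases ih _ (by rw [← hN]; simpa [Finsupp.weight_single] using hlt)
      (Finsupp.single γ 1 + Finsupp.single δ 1 + r) rfl with h | ⟨s', hs', h⟩
    · left
      simpa using Ideal.add_mem _ hrel h
    · refine Or.inr ⟨s', hs', ?_⟩
      simpa using Ideal.add_mem _ hrel h
  · left
    rw [hmon]
    exact Ideal.mul_mem_left _ _ (Ideal.subset_span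
      ⟨α, β, hαβ, hβα, Or.inr ⟨not_and_or.mp hb, rfl⟩⟩)

lemma exists_standard_representative (p : MvPolynomial (BasicOneCover G) K) :
    ∃ q : MvPolynomial (BasicOneCover G) K, (∀ s ∈ q.support, IsStandard A s) ∧
      p - q ∈ Ideal.span (straighteningRelations K G A) := by
  classical
  induction p using MvPolynomial.induction_on' with
  | monomial s c =>
    have hc : ∀ t : BasicOneCover G →₀ ℕ, monomial t c = C c * monomial t 1 := fun t => by
      rw [C_mul_monomial, mul_one]
    rcases monomial_straighten (A := A) K s with h | ⟨s', hs', h⟩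
    · refine ⟨0, by simp, ?_⟩
      rw [sub_zero, hc]
      exact Ideal.mul_mem_left _ _ h
    · refine ⟨monomial s' c, fun t ht => ?_, ?_⟩
      · rwa [Finset.mem_singleton.mp (support_monomial_subset ht)]
      · rw [hc s, hc s', ← mul_sub]
        exact Ideal.mul_mem_left _ _ h
  | add p q hp hq =>
    obtain ⟨p', hp', hp⟩ := hp
    obtain ⟨q', hq', hq⟩ := hq
    refine ⟨p' + q', fun s hs => ?_, ?_⟩
    · exact (Finset.mem_union.mp (support_add hs)).elim (hp' s) (hq' s)
    · rw [add_sub_add_comm]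
      exact Ideal.add_mem _ hp hq

/-- Standard monomials are linearly independent modulo the kernel of `Φ`. -/
lemma eq_zero_of_standard_of_mem_ker (hbip : ∀ i j : Fin n, G.Adj i j → (i ∈ A ↔ j ∉ A))
    {q : MvPolynomial (BasicOneCover G) K} (hstd : ∀ s ∈ q.support, IsStandard A s)
    (hq : q ∈ RingHom.ker (Phi K G).toRingHom) : q = 0 := by
  classical
  rw [mem_ker_Phi_iff] at hq
  ext s
  rw [coeff_zero]
  by_contra hs
  rw [← ne_eq, ← mem_support_iff] at hs
  have h := coeff_eq_zero_of_mem_irrelevantIdeal K hq (m := imageExponent G s)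
    fun v hv => (hstd s hs).exists_tight hbip hv
  nth_rewrite 1 [q.as_sum] at h
  rw [map_sum, AddSubmonoidClass.coe_finsetSum, coeff_sum, Finset.sum_eq_single s] at h
  · rw [reesLift_monomial, coeff_monomial, if_pos rfl] at h
    exact mem_support_iff.mp hs h
  · intro t ht hts
    rw [reesLift_monomial, coeff_monomial, if_neg]
    exact fun e => hts ((hstd t ht).eq_of_imageExponent_eq hbip (hstd s hs) e)
  · exact fun h' => absurd hs h'

end Algebra

/-- Let `G` be a bipartite graph. The kernel of the presentation
`Φ : K[P(G)] → Ā(G)` is generated by the straightening relations. -/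
theorem ker_Phi_eq_span_straighteningRelations (K : Type*) [Field K] {n : ℕ}
    (G : SimpleGraph (Fin n)) (A : Finset (Fin n))
    (hbip : ∀ i j : Fin n, G.Adj i j → (i ∈ A ↔ j ∉ A))
    (hcard : A.card ≤ Aᶜ.card)
    (hiso : ∀ v : Fin n, ∃ w, G.Adj v w) :
    RingHom.ker (Phi K G).toRingHom = Ideal.span (straighteningRelations K G A) := by
  refine le_antisymm (fun p hp => ?_) (straighteningRelations_le_ker K hbip)
  obtain ⟨q, hstd, hpq⟩ := exists_standard_representative (A := A) K p
  have hq : q = 0 := by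
    refine eq_zero_of_standard_of_mem_ker K hbip hstd ?_
    simpa using Ideal.sub_mem _ hp (straighteningRelations_le_ker K hbip hpq)
  simpa [hq] using hpq
end

section
/- Let G be a connected graph. There exists a polynomial P∈ℚ[t] of degree gdim(G)−1 such that for all sufficiently large natural numbers h, P(h) equals the number of basic 2h-covers of G. -/
/-- A free parameter pair. -/
def IsFreeParameterPair {n r : ℕ} (G : SimpleGraph (Fin n)) (a b : Fin r → Fin n) : Prop :=
  Function.Injective a ∧ Function.Injective b ∧
  (∀ i j : Fin r, ¬ G.Adj (a i) (a j)) ∧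
  (∀ i j : Fin r, a i ≠ b j) ∧
  (∀ i : Fin r, G.Adj (a i) (b i)) ∧
  (∀ i j : Fin r, G.Adj (a i) (b j) → i ≤ j)

/-- `G` has a free parameter set of cardinality `r`. -/
def HasFreeParameterSet {n : ℕ} (G : SimpleGraph (Fin n)) (r : ℕ) : Prop :=
  ∃ a b : Fin r → Fin n, IsFreeParameterPair G a b

/-- The graphical dimension. -/
noncomputable def gdim {n : ℕ} (G : SimpleGraph (Fin n)) : ℕ :=
  sSup {r : ℕ | HasFreeParameterSet G r} + 1

open Finset

/-- For a graph without isolated vertices, a cover is basic if and only if every vertex lies on an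
edge along which the covering inequality is an equality. -/
theorem isBasicCover_iff {n : ℕ} {G : SimpleGraph (Fin n)} (hiso : ∀ v : Fin n, ∃ w, G.Adj v w)
    (k : ℕ) (α : Fin n → ℕ) :
    IsBasicCover G k α ↔ IsCover G k α ∧ ∀ i, ∃ j, G.Adj i j ∧ α i + α j = k := by
  constructor
  · rintro ⟨hc, hmin⟩
    refine ⟨hc, fun i => ?_⟩
    by_contra! hne
    have hgt : ∀ j, G.Adj i j → k < α i + α j := fun j hij =>
      lt_of_le_of_ne (hc hij) (hne j hij).symm
    rcases Nat.eq_zero_or_pos (α i) with h0 | hpos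
    · obtain ⟨j, hij⟩ := hiso i
      have hj := hgt j hij
      have heq := hmin (Function.update α j k)
        (by
          intro v
          by_cases hv : v = j
          · subst hv; simp; omega
          · simp [hv])
        (by
          intro u v huv
          have := hc huv
          by_cases hu : u = j
          · subst hu; simp
          · by_cases hv : v = j
            · subst hv; simp
            · simpa [hu, hv] using this)
      have := congrFun heq j
      simp at this
      omega
    · have heq := hmin (Function.update α i (α i - 1))
        (by
          intro v
          by_cases hv : v = i
          · subst hv; simp
          · simp [hv])
        (by
          intro u v huv
          have := hc huv
          by_cases hu : u = i
          · subst hu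
            have := hgt v huv
            simp [huv.ne']
            omega
          · by_cases hv : v = i
            · subst hv
              have := hgt u huv.symm
              simp [hu]
              omega
            · simpa [hu, hv] using this)
      have := congrFun heq i
      simp at this
      omega
  · rintro ⟨hc, ht⟩
    refine ⟨hc, fun β hβ hcβ => funext fun i => ?_⟩
    obtain ⟨j, hij, hk⟩ := ht i
    have h1 := hcβ hij
    have h2 : β i ≤ α i := hβ i
    have h3 : β j ≤ α j := hβ j
    omega

/-- A basic cover recentred at zero: adjacent values have nonnegative sum, and every vertex lies on
an edge whose values sum to zero. -/
def IsBalanced {n : ℕ} (G : SimpleGraph (Fin n)) (x : Fin n → ℤ) : Prop :=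
  (∀ ⦃i j⦄, G.Adj i j → 0 ≤ x i + x j) ∧ ∀ i, ∃ j, G.Adj i j ∧ x i + x j = 0

open Classical in
/-- The balanced functions with absolute values at most `h`. -/
noncomputable def balancedBox {n : ℕ} (G : SimpleGraph (Fin n)) (h : ℕ) : Finset (Fin n → ℤ) :=
  (Fintype.piFinset fun _ => Finset.Icc (-(h : ℤ)) h).filter (IsBalanced G)

/-- The set of nonzero absolute values taken by `x`. -/
def absValues {n : ℕ} (x : Fin n → ℤ) : Finset ℕ :=
  (univ.image fun i => (x i).natAbs).erase 0

/-- The number of balanced functions whose set of nonzero absolute values is `{1, …, m}`. -/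
noncomputable def balancedTypeCount {n : ℕ} (G : SimpleGraph (Fin n)) (m : ℕ) : ℕ :=
  #{x ∈ balancedBox G m | absValues x = Finset.Icc 1 m}

theorem mem_absValues {n : ℕ} {x : Fin n → ℤ} {k : ℕ} :
    k ∈ absValues x ↔ k ≠ 0 ∧ ∃ i, (x i).natAbs = k := by
  simp [absValues]

theorem mem_balancedBox {n : ℕ} {G : SimpleGraph (Fin n)} {h : ℕ} {x : Fin n → ℤ} :
    x ∈ balancedBox G h ↔ IsBalanced G x ∧ absValues x ⊆ Finset.Icc 1 h := by
  simp only [balancedBox, Finset.mem_filter, Fintype.mem_piFinset, Finset.mem_Icc,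
    Finset.subset_iff, mem_absValues]
  constructor
  · rintro ⟨hb, hx⟩
    refine ⟨hx, ?_⟩
    rintro k ⟨hk, i, hi⟩
    have := hb i
    omega
  · rintro ⟨hx, hb⟩
    refine ⟨fun i => ?_, hx⟩
    by_cases h0 : (x i).natAbs = 0
    · omega
    · have := hb ⟨h0, i, rfl⟩
      omega

theorem card_basicCover_eq_card_balancedBox {n : ℕ} {G : SimpleGraph (Fin n)}
    (hiso : ∀ v : Fin n, ∃ w, G.Adj v w) (h : ℕ) :
    Nat.card {α : Fin n → ℕ // IsBasicCover G (2 * h) α} = #(balancedBox G h) := by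
  rw [← Nat.card_eq_finsetCard]
  refine Nat.card_congr
    { toFun := fun α => ⟨fun i => (α.1 i : ℤ) - h, ?_⟩
      invFun := fun x => ⟨fun i => (x.1 i + h).toNat, ?_⟩
      left_inv := ?_
      right_inv := ?_ }
  · obtain ⟨hc, ht⟩ := (isBasicCover_iff hiso _ _).1 α.2
    simp only [balancedBox, Finset.mem_filter, Fintype.mem_piFinset, Finset.mem_Icc]
    refine ⟨fun i => ?_, fun i j hij => ?_, fun i => ?_⟩
    · obtain ⟨j, -, hj⟩ := ht i
      omega
    · have := hc hij
      dsimp only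
      omega
    · obtain ⟨j, hij, hj⟩ := ht i
      exact ⟨j, hij, by dsimp only; omega⟩
  · have hx := x.2
    simp only [balancedBox, Finset.mem_filter, Fintype.mem_piFinset, Finset.mem_Icc] at hx
    obtain ⟨hb, hc, ht⟩ := hx
    refine (isBasicCover_iff hiso _ _).2 ⟨fun i j hij => ?_, fun i => ?_⟩
    · have := hc hij
      have := hb i
      have := hb j
      dsimp only
      omega
    · obtain ⟨j, hij, hj⟩ := ht i
      have := hb i
      have := hb j
      exact ⟨j, hij, by omega⟩
  · intro α
    ext i
    simp
  · intro x
    have hx := x.2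
    simp only [balancedBox, Finset.mem_filter, Fintype.mem_piFinset, Finset.mem_Icc] at hx
    ext i
    have := hx.1 i
    simp only
    omega

theorem exists_strictMono_image_Icc_eq (S : Finset ℕ) (h0 : 0 ∉ S) :
    ∃ f : ℕ → ℕ, StrictMono f ∧ f 0 = 0 ∧ (Finset.Icc 1 #S).image f = S := by
  induction S using Finset.induction_on_max with
  | empty => exact ⟨id, strictMono_id, rfl, by simp⟩
  | insert a S ha ih =>
    obtain ⟨f, hf, hf0, hS⟩ := ih fun h => h0 (Finset.mem_insert_of_mem h)
    have haS : a ∉ S := fun h => lt_irrefl _ (ha a h)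
    have ha0 : 0 < a := Nat.pos_of_ne_zero fun h => h0 (by simp [h])
    have hlt : ∀ i ≤ #S, f i < a := by
      intro i hi
      rcases Nat.eq_zero_or_pos i with rfl | hi0
      · rwa [hf0]
      · exact ha _ (hS ▸ Finset.mem_image_of_mem f (Finset.mem_Icc.2 ⟨hi0, hi⟩))
    refine ⟨fun i => if i ≤ #S then f i else a + (i - (#S + 1)), ?_, by simp [hf0], ?_⟩
    · intro i j hij
      by_cases hj : j ≤ #S
      · simpa [hj, hij.le.trans hj] using hf hij
      · by_cases hi : i ≤ #S
        · have := hlt i hi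
          simp only [hi, hj, if_true, if_false]
          omega
        · simp only [hi, hj, if_false]
          omega
    · rw [Finset.card_insert_of_notMem haS,
        ← Finset.insert_Icc_right_eq_Icc_add_one (by omega), Finset.image_insert]
      congr 1
      · simp
      · conv_rhs => rw [← hS]
        refine Finset.image_congr fun i hi => ?_
        have hi_le := (Finset.mem_Icc.1 (Finset.mem_coe.1 hi)).2
        simp [hi_le]

/-- The odd extension to `ℤ` of a function on `ℕ`. -/
def oddExtension (f : ℕ → ℕ) (z : ℤ) : ℤ := if 0 ≤ z then f z.natAbs else -f z.natAbs

theorem natAbs_oddExtension (f : ℕ → ℕ) (z : ℤ) :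
    (oddExtension f z).natAbs = f z.natAbs := by
  unfold oddExtension
  split_ifs <;> simp

theorem oddExtension_neg {f : ℕ → ℕ} (h0 : f 0 = 0) (z : ℤ) :
    oddExtension f (-z) = -oddExtension f z := by
  unfold oddExtension
  rcases lt_trichotomy z 0 with h | rfl | h
  · simp [h.le, h.not_ge]
  · simp [h0]
  · simp [h.le, h.not_ge]

theorem oddExtension_strictMono {f : ℕ → ℕ} (hf : StrictMono f) :
    StrictMono (oddExtension f) := by
  intro y z hyz
  unfold oddExtension
  split_ifs with hy hz hz
  · exact_mod_cast hf (show y.natAbs < z.natAbs by omega)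
  · omega
  · have := hf (show 0 < y.natAbs by omega)
    omega
  · have := hf (show z.natAbs < y.natAbs by omega)
    omega

theorem isBalanced_oddExtension_comp {n : ℕ} {G : SimpleGraph (Fin n)} {f : ℕ → ℕ}
    (hf : StrictMono f) (h0 : f 0 = 0) (x : Fin n → ℤ) :
    IsBalanced G (oddExtension f ∘ x) ↔ IsBalanced G x := by
  have hmono := oddExtension_strictMono hf
  have hle : ∀ y z : ℤ, 0 ≤ oddExtension f y + oddExtension f z ↔ 0 ≤ y + z := by
    intro y z
    rw [← neg_le_iff_add_nonneg', ← neg_le_iff_add_nonneg', ← oddExtension_neg h0, hmono.le_iff_le]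
  have heq : ∀ y z : ℤ, oddExtension f y + oddExtension f z = 0 ↔ y + z = 0 := by
    intro y z
    rw [← neg_eq_iff_add_eq_zero, ← neg_eq_iff_add_eq_zero, ← oddExtension_neg h0,
      hmono.injective.eq_iff]
  simp only [IsBalanced, Function.comp_apply, hle, heq]

theorem absValues_oddExtension_comp {n : ℕ} {f : ℕ → ℕ} (hf : StrictMono f) (h0 : f 0 = 0)
    (x : Fin n → ℤ) : absValues (oddExtension f ∘ x) = (absValues x).image f := by
  have h0' : ∀ k, f k = 0 ↔ k = 0 := fun k => by rw [← h0, hf.injective.eq_iff, h0]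
  ext k
  simp only [mem_absValues, Finset.mem_image, Function.comp_apply, natAbs_oddExtension]
  constructor
  · rintro ⟨hk, i, rfl⟩
    exact ⟨_, ⟨(h0' _).not.1 hk, i, rfl⟩, rfl⟩
  · rintro ⟨_, ⟨hk, i, rfl⟩, rfl⟩
    exact ⟨(h0' _).not.2 hk, i, rfl⟩

theorem card_balanced_absValues_eq {n : ℕ} (G : SimpleGraph (Fin n)) {h : ℕ} {S : Finset ℕ}
    (hS : S ⊆ Finset.Icc 1 h) :
    #{x ∈ balancedBox G h | absValues x = S} = balancedTypeCount G #S := by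
  obtain ⟨f, hf, h0, hfS⟩ := exists_strictMono_image_Icc_eq S fun h => by simpa using hS h
  have hinj := (oddExtension_strictMono hf).injective
  refine (Finset.card_bij (fun x _ => oddExtension f ∘ x) ?_ ?_ ?_).symm
  · intro x hx
    obtain ⟨hx, hxS⟩ := Finset.mem_filter.1 hx
    have hval : absValues (oddExtension f ∘ x) = S := by
      rw [absValues_oddExtension_comp hf h0, hxS, hfS]
    exact Finset.mem_filter.2 ⟨mem_balancedBox.2
      ⟨(isBalanced_oddExtension_comp hf h0 x).2 (mem_balancedBox.1 hx).1, hval ▸ hS⟩, hval⟩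
  · intro x _ y _ hxy
    exact hinj.comp_left hxy
  · intro y hy
    obtain ⟨hy, hyS⟩ := Finset.mem_filter.1 hy
    have hrange : ∀ i, ∃ z, oddExtension f z = y i := by
      intro i
      have hnat : ∃ k, f k = (y i).natAbs := by
        by_cases hi : (y i).natAbs = 0
        · exact ⟨0, by rw [h0, hi]⟩
        · have hmem : (y i).natAbs ∈ S := hyS ▸ mem_absValues.2 ⟨hi, i, rfl⟩
          rw [← hfS, Finset.mem_image] at hmem
          obtain ⟨k, -, hk⟩ := hmem
          exact ⟨k, hk⟩
      obtain ⟨k, hk⟩ := hnat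
      have hpos : oddExtension f k = f k := by simp [oddExtension]
      rcases le_total 0 (y i) with hi | hi
      · exact ⟨k, by rw [hpos]; omega⟩
      · exact ⟨-k, by rw [oddExtension_neg h0, hpos]; omega⟩
    choose x hx using hrange
    have hxy : oddExtension f ∘ x = y := funext hx
    have hval : absValues x = Finset.Icc 1 #S := by
      apply Finset.image_injective hf.injective
      rw [hfS, ← absValues_oddExtension_comp hf h0, hxy, hyS]
    refine ⟨x, Finset.mem_filter.2 ⟨mem_balancedBox.2 ⟨?_, hval.le⟩, hval⟩, hxy⟩
    rw [← isBalanced_oddExtension_comp hf h0, hxy]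
    exact (mem_balancedBox.1 hy).1

theorem card_balancedBox {n : ℕ} (G : SimpleGraph (Fin n)) (h : ℕ) :
    #(balancedBox G h) = ∑ m ∈ range (h + 1), h.choose m * balancedTypeCount G m := by
  rw [Finset.card_eq_sum_card_fiberwise (f := absValues) (t := (Finset.Icc 1 h).powerset)
    fun x hx => Finset.mem_coe.2 (Finset.mem_powerset.2
      (mem_balancedBox.1 (Finset.mem_coe.1 hx)).2),
    Finset.sum_congr rfl fun S hS => card_balanced_absValues_eq G (Finset.mem_powerset.1 hS),
    Finset.sum_powerset_apply_card]
  simp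

theorem balancedTypeCount_ne_zero_iff {n : ℕ} {G : SimpleGraph (Fin n)} {m : ℕ} :
    balancedTypeCount G m ≠ 0 ↔ ∃ x, IsBalanced G x ∧ absValues x = Finset.Icc 1 m := by
  rw [balancedTypeCount, Finset.card_ne_zero]
  constructor
  · rintro ⟨x, hx⟩
    obtain ⟨hx, hval⟩ := Finset.mem_filter.1 hx
    exact ⟨x, (mem_balancedBox.1 hx).1, hval⟩
  · rintro ⟨x, hx, hval⟩
    exact ⟨x, Finset.mem_filter.2 ⟨mem_balancedBox.2 ⟨hx, hval.le⟩, hval⟩⟩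

theorem IsBalanced.hasFreeParameterSet {n r : ℕ} {G : SimpleGraph (Fin n)} {x : Fin n → ℤ}
    (hx : IsBalanced G x) (hval : absValues x = Finset.Icc 1 r) : HasFreeParameterSet G r := by
  have hpair : ∀ i : Fin r, ∃ a b, G.Adj a b ∧ x a = -((i : ℤ) + 1) ∧ x b = (i : ℤ) + 1 := by
    intro i
    have hmem : (i : ℕ) + 1 ∈ absValues x := by
      rw [hval, Finset.mem_Icc]
      omega
    obtain ⟨-, v, hv⟩ := mem_absValues.1 hmem
    obtain ⟨w, hvw, hw⟩ := hx.2 v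
    rcases le_total 0 (x v) with h | h
    · exact ⟨w, v, hvw.symm, by omega, by omega⟩
    · exact ⟨v, w, hvw, by omega, by omega⟩
  choose a b hab ha hb using hpair
  refine ⟨a, b, fun i j hij => ?_, fun i j hij => ?_, fun i j hij => ?_, fun i j hij => ?_, hab,
    fun i j hij => ?_⟩
  · have := ha i
    rw [hij, ha j] at this
    omega
  · have := hb i
    rw [hij, hb j] at this
    omega
  · have := hx.1 hij
    rw [ha, ha] at this
    omega
  · have := ha i
    rw [hij, hb j] at this
    omega
  · have := hx.1 hij
    rw [ha, hb] at this
    omega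

open Classical in
theorem HasFreeParameterSet.exists_isBalanced {n r : ℕ} {G : SimpleGraph (Fin n)}
    (hiso : ∀ v : Fin n, ∃ w, G.Adj v w) (hr : HasFreeParameterSet G r) :
    ∃ x, IsBalanced G x ∧ absValues x = Finset.Icc 1 r := by
  obtain ⟨a, b, -, -, haa, -, hab, hle⟩ := hr
  -- `p v` is the largest index of a parameter adjacent to `v`; `q v` is the least `p` of a neighbour
  obtain ⟨p, hp⟩ : ∃ p : Fin n → ℕ, ∀ v, p v =
      ({i : Fin r | G.Adj (a i) v} : Finset (Fin r)).sup fun i => (i : ℕ) + 1 :=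
    ⟨_, fun _ => rfl⟩
  have hp_le : ∀ v, p v ≤ r := fun v => by
    rw [hp]
    exact Finset.sup_le fun i _ => by omega
  have le_hp : ∀ i v, G.Adj (a i) v → (i : ℕ) + 1 ≤ p v := fun i v hi => by
    rw [hp]
    exact Finset.le_sup (f := fun i : Fin r => (i : ℕ) + 1) (by simpa using hi)
  have hp_attained : ∀ v, p v ≠ 0 → ∃ i : Fin r, G.Adj (a i) v ∧ p v = i + 1 := by
    intro v hv
    have hne : ({i : Fin r | G.Adj (a i) v} : Finset (Fin r)).Nonempty := by
      rw [Finset.nonempty_iff_ne_empty]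
      intro he
      exact hv (by rw [hp, he, Finset.sup_empty]; rfl)
    obtain ⟨i, hi, hsup⟩ := Finset.exists_mem_eq_sup _ hne fun i : Fin r => (i : ℕ) + 1
    exact ⟨i, by simpa using hi, by rw [hp, hsup]⟩
  have hpa : ∀ i, p (a i) = 0 := by
    intro i
    by_contra h
    obtain ⟨j, hj, -⟩ := hp_attained _ h
    exact haa _ _ hj
  have hq : ∀ v, ∃ u, G.Adj v u ∧ ∀ w, G.Adj v w → p u ≤ p w := by
    intro v
    obtain ⟨w, hw⟩ := hiso v
    obtain ⟨u, hu, hmin⟩ := Finset.exists_min_image ({w | G.Adj v w} : Finset (Fin n)) p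
      ⟨w, by simpa using hw⟩
    exact ⟨u, by simpa using hu, fun w hw => hmin w (by simpa using hw)⟩
  choose u hu hmin using hq
  have hpb : ∀ i, p (b i) = i + 1 := by
    intro i
    have h1 := le_hp i _ (hab i)
    obtain ⟨j, hj, hpj⟩ := hp_attained (b i) (by omega)
    have : (j : ℕ) ≤ i := hle _ _ hj
    omega
  have hq_adj : ∀ i v, G.Adj (a i) v → p (u v) = 0 := fun i v hi => by
    have := hmin v _ hi.symm
    rw [hpa] at this
    omega
  refine ⟨fun v => (p v : ℤ) - p (u v), ⟨fun v w hvw => ?_, fun v => ?_⟩, ?_⟩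
  · have h1 := hmin v w hvw
    have h2 := hmin w v hvw.symm
    dsimp only
    omega
  · by_cases hv : p v = 0
    · refine ⟨u v, hu v, ?_⟩
      have := hmin (u v) v (hu v).symm
      dsimp only
      omega
    · obtain ⟨i, hi, hpi⟩ := hp_attained v hv
      refine ⟨a i, hi.symm, ?_⟩
      have h1 := hq_adj i v hi
      have h2 := hmin (a i) v hi
      have h3 := le_hp i _ (hu (a i))
      have h4 := hpa i
      dsimp only
      omega
  · ext k
    rw [mem_absValues, Finset.mem_Icc]
    constructor
    · rintro ⟨hk, v, hv⟩
      have h1 := hp_le v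
      have h2 := hp_le (u v)
      omega
    · rintro ⟨hk1, hk2⟩
      refine ⟨by omega, b ⟨k - 1, by omega⟩, ?_⟩
      have h1 := hpb ⟨k - 1, by omega⟩
      have h2 := hq_adj _ _ (hab ⟨k - 1, by omega⟩)
      dsimp only at h1
      omega

theorem balancedTypeCount_ne_zero_iff_hasFreeParameterSet {n r : ℕ} {G : SimpleGraph (Fin n)}
    (hiso : ∀ v : Fin n, ∃ w, G.Adj v w) :
    balancedTypeCount G r ≠ 0 ↔ HasFreeParameterSet G r := by
  rw [balancedTypeCount_ne_zero_iff]
  exact ⟨fun ⟨_, hx, hval⟩ => hx.hasFreeParameterSet hval, fun h => h.exists_isBalanced hiso⟩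

theorem bddAbove_hasFreeParameterSet {n : ℕ} (G : SimpleGraph (Fin n)) :
    BddAbove {r : ℕ | HasFreeParameterSet G r} := by
  refine ⟨n, ?_⟩
  rintro r ⟨a, b, ha, -⟩
  simpa using Fintype.card_le_of_injective a ha

theorem hasFreeParameterSet_gdim_sub_one {n : ℕ} (G : SimpleGraph (Fin n)) :
    HasFreeParameterSet G (gdim G - 1) :=
  Nat.sSup_mem (s := {r : ℕ | HasFreeParameterSet G r})
    ⟨0, Fin.elim0, Fin.elim0, fun i => i.elim0, fun i => i.elim0, fun i => i.elim0,
      fun i => i.elim0, fun i => i.elim0, fun i => i.elim0⟩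
    (bddAbove_hasFreeParameterSet G)

theorem HasFreeParameterSet.le_gdim_sub_one {n r : ℕ} {G : SimpleGraph (Fin n)}
    (hr : HasFreeParameterSet G r) : r ≤ gdim G - 1 :=
  le_csSup (bddAbove_hasFreeParameterSet G) hr

open Polynomial in
/-- A combination of binomial coefficients `h.choose m` with `m ≤ d` and nonzero top coefficient is
a polynomial in `h` of degree `d`. -/
theorem exists_polynomial_eval_eq_sum_choose (c : ℕ → ℚ) (d : ℕ) (hd : c d ≠ 0) :
    ∃ P : ℚ[X], P.degree = d ∧
      ∀ h : ℕ, P.eval (h : ℚ) = ∑ m ∈ range (d + 1), (h.choose m : ℚ) * c m := by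
  have hdeg : ∀ m, (descPochhammer ℚ m).degree = m := fun m => by
    rw [degree_eq_natDegree (monic_descPochhammer ℚ m).ne_zero, descPochhammer_natDegree]
  refine ⟨∑ m ∈ range (d + 1), C (c m / m.factorial) * descPochhammer ℚ m, ?_, fun h => ?_⟩
  · have htop : (C (c d / d.factorial) * descPochhammer ℚ d).degree = d := by
      rw [degree_C_mul (div_ne_zero hd (by positivity)), hdeg]
    rw [Finset.sum_range_succ, degree_add_eq_right_of_degree_lt, htop]
    rw [htop]
    refine (degree_sum_le _ _).trans_lt ((Finset.sup_lt_iff (WithBot.bot_lt_coe d)).2 fun m hm => ?_)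
    rw [C_mul']
    refine ((degree_smul_le _ _).trans (hdeg m).le).trans_lt ?_
    exact Nat.cast_lt.2 (Finset.mem_range.1 hm)
  · rw [eval_finsetSum]
    refine Finset.sum_congr rfl fun m _ => ?_
    rw [eval_mul, eval_C, descPochhammer_eval_eq_descFactorial, 
      Nat.descFactorial_eq_factorial_mul_choose]
    push_cast
    field_simp

/-- For a connected graph `G` there is a polynomial `P ∈ ℚ[t]` of degree
`gdim(G) − 1` such that for all sufficiently large `h`, `P(h)` equals the number of basic
`2h`-covers of `G`. -/
theorem exists_hilbert_polynomial_counting_basic_covers {n : ℕ}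
    (G : SimpleGraph (Fin n)) (hconn : G.Connected)
    (hiso : ∀ v : Fin n, ∃ w, G.Adj v w) :
    ∃ P : Polynomial ℚ, P.degree = ((gdim G - 1 : ℕ) : WithBot ℕ) ∧
      ∃ N : ℕ, ∀ h : ℕ, N ≤ h →
        P.eval (h : ℚ) = Nat.card {α : Fin n → ℕ // IsBasicCover G (2 * h) α} := by
  have htop : balancedTypeCount G (gdim G - 1) ≠ 0 :=
    (balancedTypeCount_ne_zero_iff_hasFreeParameterSet hiso).2 (hasFreeParameterSet_gdim_sub_one G)
  obtain ⟨P, hdeg, hP⟩ := exists_polynomial_eval_eq_sum_choose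
    (fun m => (balancedTypeCount G m : ℚ)) (gdim G - 1) (Nat.cast_ne_zero.2 htop)
  refine ⟨P, hdeg, gdim G - 1, fun h hh => ?_⟩
  rw [hP, card_basicCover_eq_card_balancedBox hiso, card_balancedBox]
  push_cast
  refine Finset.sum_subset (Finset.range_subset_range.2 (by omega)) fun m _ hm => ?_
  have hzero : balancedTypeCount G m = 0 := by
    by_contra hne
    have := ((balancedTypeCount_ne_zero_iff_hasFreeParameterSet hiso).1 hne).le_gdim_sub_one
    rw [Finset.mem_range] at hm
    omega
  simp [hzero]
end

section
/- For every graph G the graphical dimension satisfies γ_P(G)/2 + 1 ≤ gdim(G) ≤ ν(G) + 1, where γ_P(G) is the paired-domination number and ν(G) is the matching number of G. -/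
/-- `G` has a matching consisting of `r` pairwise disjoint edges. -/
def HasMatchingOfSize {n : ℕ} (G : SimpleGraph (Fin n)) (r : ℕ) : Prop :=
  ∃ e : Fin r → Fin n × Fin n, (∀ i, G.Adj (e i).1 (e i).2) ∧
    ∀ i j : Fin r, i ≠ j →
      (e i).1 ≠ (e j).1 ∧ (e i).1 ≠ (e j).2 ∧ (e i).2 ≠ (e j).1 ∧ (e i).2 ≠ (e j).2

/-- The matching number `ν(G)`. -/
noncomputable def matchingNumber {n : ℕ} (G : SimpleGraph (Fin n)) : ℕ :=
  sSup {r : ℕ | HasMatchingOfSize G r}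

/-- A paired-dominating set: a dominating set whose induced subgraph has a perfect matching. -/
def IsPairedDominatingSet {n : ℕ} (G : SimpleGraph (Fin n)) (s : Finset (Fin n)) : Prop :=
  (∀ v : Fin n, v ∉ s → ∃ w ∈ s, G.Adj v w) ∧
  ∃ r : ℕ, ∃ e : Fin r → Fin n × Fin n, (∀ i, G.Adj (e i).1 (e i).2) ∧
    (∀ i j : Fin r, i ≠ j →
      (e i).1 ≠ (e j).1 ∧ (e i).1 ≠ (e j).2 ∧ (e i).2 ≠ (e j).1 ∧ (e i).2 ≠ (e j).2) ∧
    (∀ i, (e i).1 ∈ s ∧ (e i).2 ∈ s) ∧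
    (∀ v ∈ s, ∃ i, v = (e i).1 ∨ v = (e i).2)

/-- The paired-domination number `γ_P(G)`. -/
noncomputable def pairedDominationNumber {n : ℕ} (G : SimpleGraph (Fin n)) : ℕ :=
  sInf {m : ℕ | ∃ s : Finset (Fin n), IsPairedDominatingSet G s ∧ s.card = m}

theorem HasMatchingOfSize.le_card {n r : ℕ} {G : SimpleGraph (Fin n)}
    (h : HasMatchingOfSize G r) : r ≤ n := by
  obtain ⟨e, -, he⟩ := h
  have hinj : Function.Injective fun i => (e i).1 := fun i j hij => by
    by_contra hne
    exact (he i j hne).1 hij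
  simpa using Fintype.card_le_of_injective _ hinj

/-- The edges `{a i, b i}` of a free parameter pair are pairwise disjoint. -/
theorem IsFreeParameterPair.disjoint_edges {n r : ℕ} {G : SimpleGraph (Fin n)}
    {a b : Fin r → Fin n} (h : IsFreeParameterPair G a b) (i j : Fin r) (hij : i ≠ j) :
    a i ≠ a j ∧ a i ≠ b j ∧ b i ≠ a j ∧ b i ≠ b j := by
  obtain ⟨ha, hb, -, hab, -⟩ := h
  exact ⟨ha.ne hij, hab i j, (hab j i).symm, hb.ne hij⟩

theorem HasFreeParameterSet.hasMatchingOfSize {n r : ℕ} {G : SimpleGraph (Fin n)}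
    (h : HasFreeParameterSet G r) : HasMatchingOfSize G r := by
  obtain ⟨a, b, hab⟩ := h
  exact ⟨fun i => (a i, b i), hab.2.2.2.2.1, hab.disjoint_edges⟩

/-- A free parameter pair can be extended by an edge `{v, w}` as soon as `v` neither belongs to
nor is adjacent to the vertices already listed. -/
theorem IsFreeParameterPair.snoc {n r : ℕ} {G : SimpleGraph (Fin n)} {a b : Fin r → Fin n}
    (h : IsFreeParameterPair G a b) {v w : Fin n} (hvw : G.Adj v w)
    (hva : ∀ i, v ≠ a i) (hvb : ∀ i, v ≠ b i)
    (hna : ∀ i, ¬ G.Adj v (a i)) (hnb : ∀ i, ¬ G.Adj v (b i)) :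
    IsFreeParameterPair G (Fin.snoc a v : Fin (r + 1) → Fin n)
      (Fin.snoc b w : Fin (r + 1) → Fin n) := by
  obtain ⟨ha, hb, hind, hab, hadj, hle⟩ := h
  have hwa : ∀ i, a i ≠ w := fun i hi => hna i (hi ▸ hvw)
  have hwb : ∀ i, b i ≠ w := fun i hi => hnb i (hi ▸ hvw)
  refine ⟨?_, ?_, ?_, ?_, ?_, ?_⟩
  · exact Fin.snoc_injective_iff.2 ⟨ha, by rintro ⟨i, hi⟩; exact hva i hi.symm⟩
  · exact Fin.snoc_injective_iff.2 ⟨hb, by rintro ⟨i, hi⟩; exact hwb i hi⟩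
  · intro i j
    cases i using Fin.lastCases <;> cases j using Fin.lastCases <;>
      simp [hind, hna, G.adj_comm _ v]
  · intro i j
    cases i using Fin.lastCases <;> cases j using Fin.lastCases <;>
      simp [hab, hwa, hvb, hvw.ne]
  · intro i
    cases i using Fin.lastCases <;> simp [hadj, hvw]
  · intro i j
    cases j using Fin.lastCases with
    | last => exact fun _ => Fin.le_last i
    | cast j =>
      cases i using Fin.lastCases with
      | last => simp [hnb]
      | cast i => simpa using hle i j

/-- The vertices of a maximal free parameter pair form a paired-dominating set. -/
theorem IsFreeParameterPair.pairedDominationNumber_le {n r : ℕ} {G : SimpleGraph (Fin n)}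
    {a b : Fin r → Fin n} (hab : IsFreeParameterPair G a b)
    (hiso : ∀ v : Fin n, ∃ w, G.Adj v w) (hmax : ¬ HasFreeParameterSet G (r + 1)) :
    pairedDominationNumber G ≤ 2 * r := by
  classical
  let s : Finset (Fin n) := Finset.univ.image a ∪ Finset.univ.image b
  have has : ∀ i, a i ∈ s := fun i => by simp [s]
  have hbs : ∀ i, b i ∈ s := fun i => by simp [s]
  have hs : IsPairedDominatingSet G s := by
    refine ⟨fun v hv => ?_, r, fun i => (a i, b i), hab.2.2.2.2.1, hab.disjoint_edges,
      fun i => ⟨has i, hbs i⟩, fun v hv => ?_⟩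
    · by_contra! hdom
      obtain ⟨w, hvw⟩ := hiso v
      exact hmax ⟨_, _, hab.snoc hvw (fun i hi => hv (hi ▸ has i)) (fun i hi => hv (hi ▸ hbs i))
        (fun i => hdom _ (has i)) (fun i => hdom _ (hbs i))⟩
    · simp only [s, Finset.mem_union, Finset.mem_image, Finset.mem_univ, true_and] at hv
      rcases hv with ⟨i, hi⟩ | ⟨i, hi⟩
      · exact ⟨i, Or.inl hi.symm⟩
      · exact ⟨i, Or.inr hi.symm⟩
  calc pairedDominationNumber G ≤ s.card := Nat.sInf_le ⟨s, hs, rfl⟩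
    _ ≤ (Finset.univ.image a).card + (Finset.univ.image b).card := Finset.card_union_le _ _
    _ ≤ r + r := by
      gcongr <;> exact Finset.card_image_le.trans_eq (by simp)
    _ = 2 * r := by ring

/-- For every graph `G` (no isolated vertices):
`γ_P(G)/2 + 1 ≤ gdim(G) ≤ ν(G) + 1`. -/
theorem gdim_bounds {n : ℕ} (G : SimpleGraph (Fin n))
    (hiso : ∀ v : Fin n, ∃ w, G.Adj v w) :
    pairedDominationNumber G / 2 + 1 ≤ gdim G ∧ gdim G ≤ matchingNumber G + 1 := by
  have hbddM : BddAbove {r : ℕ | HasMatchingOfSize G r} := ⟨n, fun _ h => h.le_card⟩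
  have hbdd : BddAbove {r : ℕ | HasFreeParameterSet G r} :=
    hbddM.mono fun _ h => h.hasMatchingOfSize
  have hne : {r : ℕ | HasFreeParameterSet G r}.Nonempty :=
    ⟨0, Fin.elim0, Fin.elim0, by simp [IsFreeParameterPair, Function.Injective]⟩
  have hmem : HasFreeParameterSet G (sSup {r : ℕ | HasFreeParameterSet G r}) :=
    Nat.sSup_mem hne hbdd
  refine ⟨Nat.add_le_add_right ?_ 1, Nat.add_le_add_right ?_ 1⟩
  · obtain ⟨a, b, hab⟩ := hmem
    have := hab.pairedDominationNumber_le hiso fun h =>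
      (Nat.lt_succ_self _).not_ge (le_csSup hbdd h)
    omega
  · exact le_csSup hbddM hmem.hasMatchingOfSize
end
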